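/- arXiv:1807.06360 — 8 statements merged into one kernel-verified Lean document; each statement's English description precedes it below -/
import Mathlib

section
/- Let (X, μ) be a measure space with 0 < μ(X) < ∞, let M⁰ ∈ (0,1), μ_s > 0, β > 1, ε ∈ (0,1], δ ∈ (0,1), and let ρ : X → ℝ be measurable with ρ ≥ 0 a.e. and ∫_X ρ dμ ≤ M⁰ μ(X). Then ∫_X 1/(2 μ_s + λ_{ε,δ}(ρ(x))) dμ(x) ≥ (1 − 2M⁰/(1+M⁰)) μ(X) / (2 μ_s + ((1+M⁰)/(1−M⁰))^β). -/
open MeasureTheory Real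

/-- Lemma 3 of the paper: uniform lower bound on the integral of
`ν_{ε,δ}(ρ) = 1/(2μ_s + λ_{ε,δ}(ρ))`, where the truncated bulk viscosity is
`λ_{ε,δ}(ρ) = ε (ρ/(1−ρ))^β` for `ρ ≤ 1−δ` and `ε (ρ/δ)^β` for `ρ > 1−δ`. -/
theorem stmt0 {X : Type*} [MeasurableSpace X] (μ : Measure X)
    (hμ0 : 0 < μ Set.univ) (hμfin : μ Set.univ < ⊤)
    (M0 μs ε β δ : ℝ) (hM0 : M0 ∈ Set.Ioo (0:ℝ) 1) (hμs : 0 < μs)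
    (hβ : 1 < β) (hε : ε ∈ Set.Ioc (0:ℝ) 1) (hδ : δ ∈ Set.Ioo (0:ℝ) 1)
    (ρ : X → ℝ) (hρm : Measurable ρ) (hρ0 : ∀ᵐ x ∂μ, 0 ≤ ρ x)
    (hmass : ∫⁻ x, ENNReal.ofReal (ρ x) ∂μ ≤ ENNReal.ofReal M0 * μ Set.univ) :
    ENNReal.ofReal ((1 - 2 * M0 / (1 + M0)) / (2 * μs + ((1 + M0) / (1 - M0)) ^ β))
        * μ Set.univ
      ≤ ∫⁻ x, ENNReal.ofReal
          (1 / (2 * μs +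
            (if ρ x ≤ 1 - δ then ε * (ρ x / (1 - ρ x)) ^ β else ε * (ρ x / δ) ^ β))) ∂μ := by
  obtain ⟨hM, hM1⟩ := hM0
  obtain ⟨hε0, hε1⟩ := hε
  obtain ⟨hδ0, hδ1⟩ := hδ
  haveI : IsFiniteMeasure μ := ⟨hμfin⟩
  set K : ℝ := ((1 + M0) / (1 - M0)) ^ β with hK
  have hK0 : 0 ≤ K := by
    apply Real.rpow_nonneg
    exact div_nonneg (by linarith) (by linarith)
  set A : Set X := {x | ρ x < (1 + M0) / 2} with hA
  have hAm : MeasurableSet A := measurableSet_lt hρm measurable_const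
  have hmk := mul_meas_ge_le_lintegral (μ := μ) (hρm.ennreal_ofReal)
    (ENNReal.ofReal ((1 + M0) / 2))
  have hset : {x | ENNReal.ofReal ((1 + M0) / 2) ≤ ENNReal.ofReal (ρ x)} = Aᶜ := by
    ext x
    simp only [hA, Set.mem_setOf_eq, Set.mem_compl_iff, not_lt]
    constructor
    · intro h
      by_contra hc
      push Not at hc
      exact absurd h (not_le.mpr ((ENNReal.ofReal_lt_ofReal_iff (by linarith)).mpr hc))
    · intro h
      exact ENNReal.ofReal_le_ofReal h
  rw [hset] at hmk
  have h1 := hmk.trans hmass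
  have h2 : (1 + M0) / 2 * μ.real Aᶜ ≤ M0 * μ.real Set.univ := by
    have := ENNReal.toReal_mono (ENNReal.mul_ne_top ENNReal.ofReal_ne_top hμfin.ne) h1
    rw [ENNReal.toReal_mul, ENNReal.toReal_mul, ENNReal.toReal_ofReal (by linarith),
      ENNReal.toReal_ofReal hM.le] at this
    exact this
  have h3 : μ.real A + μ.real Aᶜ = μ.real Set.univ := measureReal_add_measureReal_compl hAm
  have h4 : (1 - 2 * M0 / (1 + M0)) * μ.real Set.univ ≤ μ.real A := by
    have : μ.real Aᶜ ≤ 2 * M0 / (1 + M0) * μ.real Set.univ := by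
      rw [div_mul_eq_mul_div, le_div_iff₀ (by linarith)]
      linarith
    linarith
  have h5 : ENNReal.ofReal ((1 - 2 * M0 / (1 + M0)) / (2 * μs + K)) * μ Set.univ
      ≤ ENNReal.ofReal (1 / (2 * μs + K)) * μ A := by
    rw [← ofReal_measureReal (μ := μ) (s := Set.univ), ← ofReal_measureReal (μ := μ) (s := A),
      ← ENNReal.ofReal_mul' measureReal_nonneg, ← ENNReal.ofReal_mul' measureReal_nonneg]
    apply ENNReal.ofReal_le_ofReal
    rw [div_mul_eq_mul_div, div_mul_eq_mul_div, one_mul]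
    gcongr
  refine h5.trans ?_
  rw [← setLIntegral_const]
  refine le_trans ?_ (setLIntegral_le_lintegral A _)
  apply lintegral_mono_ae
  filter_upwards [ae_restrict_mem hAm, ae_restrict_of_ae hρ0] with x hx h0
  have hx : ρ x < (1 + M0) / 2 := hx
  have hr1 : 0 < 1 - ρ x := by linarith
  have hkey : ρ x / (1 - ρ x) ≤ (1 + M0) / (1 - M0) := by
    rw [div_le_div_iff₀ hr1 (by linarith)]
    nlinarith
  have hgen : ∀ y : ℝ, 0 ≤ y → y ≤ (1 + M0) / (1 - M0) → ε * y ^ β ≤ K ∧ 0 ≤ ε * y ^ β := by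
    intro y hy hyl
    have a := Real.rpow_le_rpow hy hyl (by linarith : 0 ≤ β)
    have b := Real.rpow_nonneg hy β
    exact ⟨by nlinarith, by positivity⟩
  apply ENNReal.ofReal_le_ofReal
  split_ifs with h
  · obtain ⟨a, b⟩ := hgen _ (div_nonneg h0 hr1.le) hkey
    exact one_div_le_one_div_of_le (by linarith) (by linarith)
  · obtain ⟨a, b⟩ := hgen (ρ x / δ) (div_nonneg h0 hδ0.le)
      ((div_le_div_of_nonneg_left h0 hr1 (by linarith)).trans hkey)
    exact one_div_le_one_div_of_le (by linarith) (by linarith)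
end

section
/- Let (X, μ) be a measure space, γ > 1, ε > 0, δ ∈ (0,1), C ≥ 0, and let ρ : X → ℝ be measurable with ρ ≥ 0 a.e. and ∫_X H_{ε,δ}(ρ(x)) dμ(x) ≤ C. Then μ{x ∈ X : ρ(x) ≥ 1−δ} ≤ C (γ−1) δ^{γ−1} / (ε (1−δ)^γ). -/
open MeasureTheory Real

/-- Control of the truncated internal energy
`H_{ε,δ}(ρ) = (ε/(γ−1)) ρ^γ/(1−ρ)^{γ−1}` for `ρ ≤ 1−δ`,
`(ε/(γ−1)) ρ^γ/δ^γ − (ε/((γ−1)δ^γ))(1−δ)^γ ρ` for `ρ > 1−δ`,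
yields an estimate of order `δ^{γ−1}` of the measure of `{ρ ≥ 1−δ}`. -/
theorem stmt1 {X : Type*} [MeasurableSpace X] (μ : Measure X)
    (γ ε δ C : ℝ) (hγ : 1 < γ) (hε : 0 < ε) (hδ : δ ∈ Set.Ioo (0:ℝ) 1) (hC : 0 ≤ C)
    (ρ : X → ℝ) (hρm : Measurable ρ) (hρ0 : ∀ᵐ x ∂μ, 0 ≤ ρ x)
    (hH : ∫⁻ x, ENNReal.ofReal
        (if ρ x ≤ 1 - δ then ε / (γ - 1) * (ρ x) ^ γ / (1 - ρ x) ^ (γ - 1)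
         else ε / (γ - 1) * (ρ x) ^ γ / δ ^ γ
                - ε / ((γ - 1) * δ ^ γ) * (1 - δ) ^ γ * ρ x) ∂μ
      ≤ ENNReal.ofReal C) :
    μ {x | 1 - δ ≤ ρ x}
      ≤ ENNReal.ofReal (C * (γ - 1) * δ ^ (γ - 1) / (ε * (1 - δ) ^ γ)) := by
  obtain ⟨hδ0, hδ1⟩ := hδ
  have ha : 0 < 1 - δ := by linarith
  have hg : 0 < γ - 1 := by linarith
  have hP : 0 < δ ^ (γ - 1) := rpow_pos_of_pos hδ0 _
  have hA : 0 < (1 - δ) ^ (γ - 1) := rpow_pos_of_pos ha _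
  have key : ∀ y : ℝ, 0 < y → y ^ γ = y ^ (γ - 1) * y := by
    intro y hy
    rw [rpow_sub_one hy.ne']
    field_simp
  have hAγ : 0 < (1 - δ) ^ γ := rpow_pos_of_pos ha _
  set c : ℝ := ε * (1 - δ) ^ γ / ((γ - 1) * δ ^ (γ - 1)) with hc
  have hc0 : 0 < c := by positivity
  have hS : MeasurableSet {x | 1 - δ ≤ ρ x} := measurableSet_le measurable_const hρm
  have h1 : ENNReal.ofReal c * μ {x | 1 - δ ≤ ρ x} ≤ ENNReal.ofReal C := by
    rw [← lintegral_indicator_const hS]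
    refine le_trans (lintegral_mono fun x => ?_) hH
    by_cases hx : 1 - δ ≤ ρ x
    · rw [Set.indicator_of_mem (show x ∈ {x | 1 - δ ≤ ρ x} from hx)]
      apply ENNReal.ofReal_le_ofReal
      split_ifs with h
      · have he : ρ x = 1 - δ := le_antisymm h hx
        rw [he, sub_sub_cancel, hc]
        apply le_of_eq
        field_simp
      · have hr : 0 < ρ x := by linarith
        have hmono : (1 - δ) ^ (γ - 1) ≤ ρ x ^ (γ - 1) :=
          rpow_le_rpow ha.le hx hg.le
        have h2 : δ * (1 - δ) ^ γ ≤ ρ x ^ γ - (1 - δ) ^ γ * ρ x := by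
          rw [key _ ha, key _ hr]
          have e1 := mul_le_mul_of_nonneg_right hmono hr.le
          have e2 := mul_le_mul_of_nonneg_left hx (mul_pos hδ0 hA).le
          nlinarith
        have h3 : ε / (γ - 1) * (ρ x) ^ γ / δ ^ γ
                - ε / ((γ - 1) * δ ^ γ) * (1 - δ) ^ γ * ρ x
            = ε / ((γ - 1) * δ ^ γ) * (ρ x ^ γ - (1 - δ) ^ γ * ρ x) := by
          have := rpow_pos_of_pos hδ0 γ
          field_simp
        have h4 : c = ε / ((γ - 1) * δ ^ γ) * (δ * (1 - δ) ^ γ) := by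
          rw [hc, key δ hδ0]
          field_simp
        rw [h3, h4]
        have := rpow_pos_of_pos hδ0 γ
        exact mul_le_mul_of_nonneg_left h2 (by positivity)
    · rw [Set.indicator_of_notMem (show x ∉ {x | 1 - δ ≤ ρ x} from hx)]
      exact zero_le
  have h5 : C * (γ - 1) * δ ^ (γ - 1) / (ε * (1 - δ) ^ γ) = C / c := by
    rw [hc]
    field_simp
  rw [h5, ENNReal.ofReal_div_of_pos hc0]
  rw [ENNReal.le_div_iff_mul_le (Or.inl (by simpa using hc0)) (Or.inl ENNReal.ofReal_ne_top),
    mul_comm]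
  exact h1
end

section
/- Let (X, μ) be a measure space, β > 1, ε > 0, δ ∈ (0,1), C ≥ 0, and let ρ : X → ℝ be measurable with ρ ≥ 0 a.e. and ∫_X Λ_{ε,δ}(ρ(x)) dμ(x) ≤ C. Then μ{x ∈ X : ρ(x) ≥ 1−δ} ≤ C (β−1) δ^{β−1} / (ε (1−δ)^β). -/
open MeasureTheory Real

/-- Control of the truncated quantity
`Λ_{ε,δ}(ρ) = (ε/(β−1)) ρ^β/(1−ρ)^{β−1}` for `ρ ≤ 1−δ`,
`(ε/(β−1)) ρ^β/δ^β − (ε/((β−1)δ^β))(1−δ)^β ρ` for `ρ > 1−δ`,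
yields an estimate of order `δ^{β−1}` of the measure of `{ρ ≥ 1−δ}`. -/
theorem stmt2 {X : Type*} [MeasurableSpace X] (μ : Measure X)
    (β ε δ C : ℝ) (hβ : 1 < β) (hε : 0 < ε) (hδ : δ ∈ Set.Ioo (0:ℝ) 1) (hC : 0 ≤ C)
    (ρ : X → ℝ) (hρm : Measurable ρ) (hρ0 : ∀ᵐ x ∂μ, 0 ≤ ρ x)
    (hΛ : ∫⁻ x, ENNReal.ofReal
        (if ρ x ≤ 1 - δ then ε / (β - 1) * (ρ x) ^ β / (1 - ρ x) ^ (β - 1)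
         else ε / (β - 1) * (ρ x) ^ β / δ ^ β
                - ε / ((β - 1) * δ ^ β) * (1 - δ) ^ β * ρ x) ∂μ
      ≤ ENNReal.ofReal C) :
    μ {x | 1 - δ ≤ ρ x}
      ≤ ENNReal.ofReal (C * (β - 1) * δ ^ (β - 1) / (ε * (1 - δ) ^ β)) := by
  obtain ⟨hδ0, hδ1⟩ := hδ
  have ha : 0 < 1 - δ := by linarith
  have hb : 0 < β - 1 := by linarith
  have hA : 0 < (1 - δ) ^ β := Real.rpow_pos_of_pos ha _
  have hD : 0 < δ ^ (β - 1) := Real.rpow_pos_of_pos hδ0 _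
  have hDD : δ ^ β = δ ^ (β - 1) * δ := by
    rw [← Real.rpow_add_one hδ0.ne']; congr 1; ring
  set c : ℝ := ε / (β - 1) * (1 - δ) ^ β / δ ^ (β - 1) with hc
  have hcpos : 0 < c := by positivity
  have hs : MeasurableSet {x | 1 - δ ≤ ρ x} := measurableSet_le measurable_const hρm
  have key : ENNReal.ofReal c * μ {x | 1 - δ ≤ ρ x} ≤ ENNReal.ofReal C := by
    rw [← lintegral_indicator_const hs]
    refine le_trans (lintegral_mono fun x => ?_) hΛ
    by_cases hx : 1 - δ ≤ ρ x
    · rw [Set.indicator_of_mem (by exact hx)]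
      apply ENNReal.ofReal_le_ofReal
      split_ifs with h
      · have h1 : ρ x = 1 - δ := le_antisymm h hx
        rw [h1, hc, sub_sub_cancel]
      · push Not at h
        have ht : 1 ≤ ρ x / (1 - δ) := by rw [le_div_iff₀ ha]; linarith
        have h2 : ρ x / (1 - δ) ≤ (ρ x / (1 - δ)) ^ β :=
          Real.self_le_rpow_of_one_le ht hβ.le
        have h3 : (ρ x) ^ β = (ρ x / (1 - δ)) ^ β * (1 - δ) ^ β := by
          rw [← Real.mul_rpow (by positivity) ha.le, div_mul_cancel₀ _ ha.ne']
        have h4 : ρ x = (ρ x / (1 - δ)) * (1 - δ) := by rw [div_mul_cancel₀ _ ha.ne']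
        have h5 : (1 - δ) ^ β * δ ≤ (ρ x) ^ β - (1 - δ) ^ β * ρ x := by
          have : δ + ρ x ≤ (ρ x / (1 - δ)) ^ β := by
            nlinarith
          rw [h3]; nlinarith
        have e1 : c = ε / ((β - 1) * δ ^ β) * ((1 - δ) ^ β * δ) := by
          rw [hc, hDD]; field_simp
        have e2 : ε / (β - 1) * (ρ x) ^ β / δ ^ β
                - ε / ((β - 1) * δ ^ β) * (1 - δ) ^ β * ρ x
            = ε / ((β - 1) * δ ^ β) * ((ρ x) ^ β - (1 - δ) ^ β * ρ x) := by
          have : 0 < δ ^ β := Real.rpow_pos_of_pos hδ0 _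
          field_simp
        rw [e1, e2]
        have : 0 < δ ^ β := Real.rpow_pos_of_pos hδ0 _
        exact mul_le_mul_of_nonneg_left h5 (by positivity)
    · rw [Set.indicator_of_notMem (by exact hx)]
      exact zero_le
  have e3 : C * (β - 1) * δ ^ (β - 1) / (ε * (1 - δ) ^ β) = C / c := by
    rw [hc]; field_simp
  rw [e3, ENNReal.ofReal_div_of_pos hcpos,
    ENNReal.le_div_iff_mul_le (Or.inl (by simpa using hcpos)) (Or.inl ENNReal.ofReal_ne_top), mul_comm]
  exact key
end

section
/- Let γ ≥ β > 1, ε > 0, μ_s > 0 and δ ∈ (0,1) be real numbers. Then the function ρ ↦ p_{ε,δ}(ρ)/(2μ_s + λ_{ε,δ}(ρ)) is monotone nondecreasing on [0, ∞). -/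
open Real

theorem aux_g (γ β ε μs s t : ℝ) (hβ : 1 < β) (hβγ : β ≤ γ) (hε : 0 < ε)
    (hμs : 0 < μs) (hs : 0 ≤ s) (hst : s ≤ t) :
    ε * s ^ γ / (2 * μs + ε * s ^ β) ≤ ε * t ^ γ / (2 * μs + ε * t ^ β) := by
  have ht : 0 ≤ t := hs.trans hst
  have h1 : ∀ x : ℝ, 0 ≤ x → x ^ γ = x ^ β * x ^ (γ - β) := by
    intro x hx
    rw [← Real.rpow_add_of_nonneg hx (by linarith) (by linarith)]
    congr 1; ring
  have hsb : 0 ≤ s ^ β := Real.rpow_nonneg hs _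
  have htb : 0 ≤ t ^ β := Real.rpow_nonneg ht _
  have hg : s ^ γ ≤ t ^ γ := Real.rpow_le_rpow hs hst (by linarith)
  have hd : s ^ (γ - β) ≤ t ^ (γ - β) := Real.rpow_le_rpow hs hst (by linarith)
  rw [div_le_div_iff₀ (by positivity) (by positivity)]
  have h2 : s ^ γ * t ^ β ≤ t ^ γ * s ^ β := by
    rw [h1 s hs, h1 t ht]
    have := mul_le_mul_of_nonneg_left hd (mul_nonneg hsb htb)
    linarith
  have h3 := mul_le_mul_of_nonneg_left hg (by positivity : 0 ≤ ε * (2 * μs))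
  have h4 := mul_le_mul_of_nonneg_left h2 (by positivity : 0 ≤ ε * ε)
  linarith

/-- In the dominant pressure regime `γ ≥ β > 1`, the function
`ρ ↦ p_{ε,δ}(ρ)/(2μ_s + λ_{ε,δ}(ρ))` built from the truncated laws is
monotone nondecreasing on `[0,∞)`. -/
theorem stmt11 (γ β ε μs δ : ℝ) (hβ : 1 < β) (hβγ : β ≤ γ) (hε : 0 < ε)
    (hμs : 0 < μs) (hδ : δ ∈ Set.Ioo (0:ℝ) 1) :
    MonotoneOn (fun ρ : ℝ =>
      (if ρ ≤ 1 - δ then ε * (ρ / (1 - ρ)) ^ γ else ε * (ρ / δ) ^ γ) /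
        (2 * μs + (if ρ ≤ 1 - δ then ε * (ρ / (1 - ρ)) ^ β else ε * (ρ / δ) ^ β)))
      (Set.Ici (0:ℝ)) := by
  obtain ⟨h0, h1⟩ := hδ
  intro a ha b hb hab
  have ha' : 0 ≤ a := ha
  have hb' : 0 ≤ b := hb
  dsimp only
  by_cases hA : a ≤ 1 - δ
  · have pa : 0 < 1 - a := by linarith
    by_cases hB : b ≤ 1 - δ
    · have pb : 0 < 1 - b := by linarith
      simp only [if_pos hA, if_pos hB]
      exact aux_g _ _ _ _ _ _ hβ hβγ hε hμs (by positivity)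
        (div_le_div₀ hb' hab pb (by linarith))
    · simp only [if_pos hA, if_neg hB]
      exact aux_g _ _ _ _ _ _ hβ hβγ hε hμs (by positivity)
        (div_le_div₀ hb' hab h0 (by linarith))
  · have hB : ¬ b ≤ 1 - δ := fun h => hA (hab.trans h)
    simp only [if_neg hA, if_neg hB]
    exact aux_g _ _ _ _ _ _ hβ hβγ hε hμs (by positivity)
      (div_le_div₀ hb' hab h0 le_rfl)
end

section
/- Let γ ≥ β > 1, ε > 0, μ_s > 0 and 0 < δ ≤ δ⁰ < 1 be real numbers. Then for every ρ ≥ 0, p_{ε,δ⁰}(ρ)/(2μ_s + λ_{ε,δ⁰}(ρ)) ≤ p_{ε,δ}(ρ)/(2μ_s + λ_{ε,δ}(ρ)). -/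
open Real

theorem aux_mono (γ β ε μs x y : ℝ) (hβ : 1 < β) (hβγ : β ≤ γ) (hε : 0 < ε)
    (hμs : 0 < μs) (hx : 0 ≤ x) (hxy : x ≤ y) :
    ε * x ^ γ / (2 * μs + ε * x ^ β) ≤ ε * y ^ γ / (2 * μs + ε * y ^ β) := by
  have hy : 0 ≤ y := hx.trans hxy
  have hxb : 0 ≤ x ^ β := Real.rpow_nonneg hx β
  have hyb : 0 ≤ y ^ β := Real.rpow_nonneg hy β
  have h1 : x ^ γ ≤ y ^ γ := Real.rpow_le_rpow hx hxy (by linarith)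
  have h2 : x ^ (γ - β) ≤ y ^ (γ - β) := Real.rpow_le_rpow hx hxy (by linarith)
  have ex : x ^ γ = x ^ (γ - β) * x ^ β := by
    rw [← Real.rpow_add_of_nonneg hx (by linarith) (by linarith)]; ring_nf
  have ey : y ^ γ = y ^ (γ - β) * y ^ β := by
    rw [← Real.rpow_add_of_nonneg hy (by linarith) (by linarith)]; ring_nf
  have h3 : x ^ γ * y ^ β ≤ y ^ γ * x ^ β := by
    have := mul_le_mul_of_nonneg_right h2 (mul_nonneg hxb hyb)
    rw [ex, ey]; linarith
  rw [div_le_div_iff₀ (by positivity) (by positivity)]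
  have h4 := mul_le_mul_of_nonneg_left h1 (by positivity : 0 ≤ ε * (2 * μs))
  have h5 := mul_le_mul_of_nonneg_left h3 (by positivity : 0 ≤ ε * ε)
  linarith

/-- Monotonicity in the truncation parameter: for `δ ≤ δ⁰` one has
`b_{ε,δ⁰}(ρ) ≤ b_{ε,δ}(ρ)` where `b_{ε,δ}(ρ) = p_{ε,δ}(ρ)/(2μ_s + λ_{ε,δ}(ρ))`. -/
theorem stmt12 (γ β ε μs δ δ0 ρ : ℝ) (hβ : 1 < β) (hβγ : β ≤ γ) (hε : 0 < ε)
    (hμs : 0 < μs) (hδ : 0 < δ) (hδδ0 : δ ≤ δ0) (hδ0 : δ0 < 1) (hρ : 0 ≤ ρ) :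
    (if ρ ≤ 1 - δ0 then ε * (ρ / (1 - ρ)) ^ γ else ε * (ρ / δ0) ^ γ) /
        (2 * μs + (if ρ ≤ 1 - δ0 then ε * (ρ / (1 - ρ)) ^ β else ε * (ρ / δ0) ^ β))
      ≤ (if ρ ≤ 1 - δ then ε * (ρ / (1 - ρ)) ^ γ else ε * (ρ / δ) ^ γ) /
        (2 * μs + (if ρ ≤ 1 - δ then ε * (ρ / (1 - ρ)) ^ β else ε * (ρ / δ) ^ β)) := by
  split_ifs with h1 h2 h2
  · exact le_rfl
  · exact absurd (by linarith) h2
  · have h : 0 < 1 - ρ := by linarith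
    have hd : 0 < δ0 := by linarith
    exact aux_mono _ _ _ _ _ _ hβ hβγ hε hμs (by positivity)
      (div_le_div_of_nonneg_left hρ h (by linarith))
  · have hd : 0 < δ0 := by linarith
    exact aux_mono _ _ _ _ _ _ hβ hβγ hε hμs (by positivity)
      (div_le_div_of_nonneg_left hρ hδ hδδ0)
end

section
/- Let 1 < γ ≤ β, ε ∈ (0,1], μ_s > 0 and δ ∈ (0,1) be real numbers. Then for every ρ ≥ 0, p_{ε,δ}(ρ)/(2μ_s + λ_{ε,δ}(ρ)) ≤ max(1, 1/(2μ_s)). -/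
open Real

theorem key_aux (γ β ε μs x : ℝ) (hγ : 1 < γ) (hγβ : γ ≤ β)
    (hε : ε ∈ Set.Ioc (0:ℝ) 1) (hμs : 0 < μs) (hx : 0 ≤ x) :
    ε * x ^ γ / (2 * μs + ε * x ^ β) ≤ max 1 (1 / (2 * μs)) := by
  obtain ⟨h0, h1⟩ := hε
  have hb : 0 ≤ ε * x ^ β := mul_nonneg h0.le (Real.rpow_nonneg hx β)
  rcases le_total x 1 with h | h
  · apply le_max_of_le_right
    have hg : x ^ γ ≤ 1 := Real.rpow_le_one hx h (by linarith)
    have hg0 : 0 ≤ x ^ γ := Real.rpow_nonneg hx γ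
    apply div_le_div₀ zero_le_one _ (by linarith) (by linarith)
    nlinarith
  · apply le_max_of_le_left
    rw [div_le_one (by linarith)]
    have := mul_le_mul_of_nonneg_left (Real.rpow_le_rpow_of_exponent_le h hγβ) h0.le
    linarith

/-- In the dominant bulk viscosity regime `1 < γ ≤ β` and for `ε ∈ (0,1]`, the
quantity `p_{ε,δ}(ρ)/(2μ_s + λ_{ε,δ}(ρ))` is bounded by `max(1, 1/(2μ_s))`,
uniformly in `δ` and `ε`. -/
theorem stmt13 (γ β ε μs δ ρ : ℝ) (hγ : 1 < γ) (hγβ : γ ≤ β)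
    (hε : ε ∈ Set.Ioc (0:ℝ) 1) (hμs : 0 < μs) (hδ : δ ∈ Set.Ioo (0:ℝ) 1)
    (hρ : 0 ≤ ρ) :
    (if ρ ≤ 1 - δ then ε * (ρ / (1 - ρ)) ^ γ else ε * (ρ / δ) ^ γ) /
        (2 * μs + (if ρ ≤ 1 - δ then ε * (ρ / (1 - ρ)) ^ β else ε * (ρ / δ) ^ β))
      ≤ max 1 (1 / (2 * μs)) := by
  obtain ⟨hδ0, hδ1⟩ := hδ
  split_ifs with h
  · exact key_aux γ β ε μs _ hγ hγβ hε hμs (div_nonneg hρ (by linarith))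
  · exact key_aux γ β ε μs _ hγ hγβ hε hμs (div_nonneg hρ hδ0.le)
end

section
/- Let γ > β > 1 and ε > 0 be real numbers, and set α = (γ−β)/(γ−1). Then for every ρ ∈ [0,1), (H_ε(ρ))^{2α} · λ_ε(ρ) = ((ε ρ)/(γ−1))^{α} · (H_ε(ρ))^{α} · p_ε(ρ); in particular (H_ε(ρ))^{2α} λ_ε(ρ) ≤ (ε/(γ−1))^{α} (H_ε(ρ))^{α} p_ε(ρ) (real powers). -/
open Real

/-- Core computation of the equi-integrability lemma: with
`α = (γ−β)/(γ−1)`, `H_ε(ρ) = (ε/(γ−1)) ρ^γ/(1−ρ)^{γ−1}`,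
`p_ε(ρ) = ε (ρ/(1−ρ))^γ` and `λ_ε(ρ) = ε (ρ/(1−ρ))^β`, one has
`(H_ε)^{2α} λ_ε = ((ερ)/(γ−1))^α (H_ε)^α p_ε ≤ (ε/(γ−1))^α (H_ε)^α p_ε`. -/
theorem stmt17 (γ β ε ρ : ℝ) (hβ : 1 < β) (hβγ : β < γ) (hε : 0 < ε)
    (hρ0 : 0 ≤ ρ) (hρ1 : ρ < 1) :
    (ε / (γ - 1) * ρ ^ γ / (1 - ρ) ^ (γ - 1)) ^ (2 * ((γ - β) / (γ - 1)))
          * (ε * (ρ / (1 - ρ)) ^ β)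
        = (ε * ρ / (γ - 1)) ^ ((γ - β) / (γ - 1))
            * (ε / (γ - 1) * ρ ^ γ / (1 - ρ) ^ (γ - 1)) ^ ((γ - β) / (γ - 1))
            * (ε * (ρ / (1 - ρ)) ^ γ) ∧
    (ε / (γ - 1) * ρ ^ γ / (1 - ρ) ^ (γ - 1)) ^ (2 * ((γ - β) / (γ - 1)))
          * (ε * (ρ / (1 - ρ)) ^ β)
        ≤ (ε / (γ - 1)) ^ ((γ - β) / (γ - 1))
            * (ε / (γ - 1) * ρ ^ γ / (1 - ρ) ^ (γ - 1)) ^ ((γ - β) / (γ - 1))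
            * (ε * (ρ / (1 - ρ)) ^ γ) := by
  have hg : 0 < γ - 1 := by linarith
  have h1 : 0 < 1 - ρ := by linarith
  have hr : 0 ≤ ρ / (1 - ρ) := by positivity
  have hH : ε / (γ - 1) * ρ ^ γ / (1 - ρ) ^ (γ - 1)
      = ε * ρ / (γ - 1) * (ρ / (1 - ρ)) ^ (γ - 1) := by
    have e : ρ ^ γ = ρ * ρ ^ (γ - 1) := by
      have := Real.rpow_add_of_nonneg hρ0 zero_le_one hg.le
      rwa [Real.rpow_one, add_sub_cancel] at this
    rw [e, Real.div_rpow hρ0 h1.le]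
    ring
  have hH0 : 0 ≤ ε / (γ - 1) * ρ ^ γ / (1 - ρ) ^ (γ - 1) := by positivity
  have hα : 0 ≤ (γ - β) / (γ - 1) := div_nonneg (by linarith) hg.le
  have hHα : (ε / (γ - 1) * ρ ^ γ / (1 - ρ) ^ (γ - 1)) ^ ((γ - β) / (γ - 1))
      = (ε * ρ / (γ - 1)) ^ ((γ - β) / (γ - 1)) * (ρ / (1 - ρ)) ^ (γ - β) := by
    rw [hH, Real.mul_rpow (by positivity) (by positivity), ← Real.rpow_mul hr,
      mul_div_cancel₀ _ hg.ne']
  have hrr : (ρ / (1 - ρ)) ^ γ = (ρ / (1 - ρ)) ^ (γ - β) * (ρ / (1 - ρ)) ^ β := by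
    rw [← Real.rpow_add_of_nonneg hr (by linarith) (by linarith), sub_add_cancel]
  have key : (ε / (γ - 1) * ρ ^ γ / (1 - ρ) ^ (γ - 1)) ^ (2 * ((γ - β) / (γ - 1)))
          * (ε * (ρ / (1 - ρ)) ^ β)
        = (ε * ρ / (γ - 1)) ^ ((γ - β) / (γ - 1))
            * (ε / (γ - 1) * ρ ^ γ / (1 - ρ) ^ (γ - 1)) ^ ((γ - β) / (γ - 1))
            * (ε * (ρ / (1 - ρ)) ^ γ) := by
    rw [two_mul, Real.rpow_add_of_nonneg hH0 hα hα, hHα, hrr]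
    ring
  refine ⟨key, ?_⟩
  rw [key]
  have hle : ε * ρ / (γ - 1) ≤ ε / (γ - 1) := by
    apply div_le_div_of_nonneg_right _ hg.le
    nlinarith
  have := Real.rpow_le_rpow (by positivity) hle hα
  apply mul_le_mul_of_nonneg_right _ (by positivity)
  exact mul_le_mul_of_nonneg_right this (by positivity)
end

section
/- Let β > 1, ε > 0, μ_s > 0, δ ∈ (0,1) and M⁰ ∈ (0,1) be real numbers. Then for every ρ ≥ 0, ρ/(2μ_s + λ_{ε,δ}(ρ)) ≤ max(1/(2μ_s), 1/(ε (M⁰)^{β−1})). -/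
open Real

/-- Uniform-in-δ pointwise bound on `ρ ν_{ε,δ}(ρ) = ρ/(2μ_s + λ_{ε,δ}(ρ))`, where
the truncated bulk viscosity is `λ_{ε,δ}(ρ) = ε (ρ/(1−ρ))^β` for `ρ ≤ 1−δ` and
`ε (ρ/δ)^β` for `ρ > 1−δ`. -/
theorem stmt18 (β ε μs δ M0 ρ : ℝ) (hβ : 1 < β) (hε : 0 < ε) (hμs : 0 < μs)
    (hδ : δ ∈ Set.Ioo (0:ℝ) 1) (hM0 : M0 ∈ Set.Ioo (0:ℝ) 1) (hρ : 0 ≤ ρ) :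
    ρ / (2 * μs + (if ρ ≤ 1 - δ then ε * (ρ / (1 - ρ)) ^ β else ε * (ρ / δ) ^ β))
      ≤ max (1 / (2 * μs)) (1 / (ε * M0 ^ (β - 1))) := by
  obtain ⟨hδ0, hδ1⟩ := hδ
  obtain ⟨hM, hM1⟩ := hM0
  by_cases h1 : ρ ≤ 1
  · apply le_max_of_le_left
    have hl : 0 ≤ (if ρ ≤ 1 - δ then ε * (ρ / (1 - ρ)) ^ β else ε * (ρ / δ) ^ β) := by
      split_ifs with h
      · have : 0 ≤ 1 - ρ := by linarith
        positivity
      · positivity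
    exact div_le_div₀ zero_le_one h1 (by linarith) (by linarith)
  · push Not at h1
    apply le_max_of_le_right
    rw [if_neg (by linarith)]
    have hMp : 0 < M0 ^ (β - 1) := Real.rpow_pos_of_pos hM _
    have hMle : M0 ^ (β - 1) ≤ 1 := Real.rpow_le_one hM.le hM1.le (by linarith)
    have hd : ρ ≤ ρ / δ := by
      rw [le_div_iff₀ hδ0]
      nlinarith
    have hp : ρ / δ ≤ (ρ / δ) ^ β := Real.self_le_rpow_of_one_le (by linarith) hβ.le
    have hq : ρ ≤ (ρ / δ) ^ β := hd.trans hp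
    have h2 : ε * ρ ≤ ε * (ρ / δ) ^ β := mul_le_mul_of_nonneg_left hq hε.le
    have h3 : ρ * (ε * M0 ^ (β - 1)) ≤ ε * ρ := by
      have : 0 ≤ ε * ρ := by positivity
      nlinarith
    have h4 : 0 < ε * ρ := by positivity
    rw [div_le_div_iff₀ (by linarith) (by positivity)]
    linarith
end
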